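/- Let n, m ≥ 1 with n ≠ m, and suppose N ≥ 0 is an integer such that τ_{n+j} = τ_{m+j} for all 0 ≤ j < N and τ_{n+N} ≠ τ_{m+N}. Then |x_n − x_m| < q_KL^{−N}, where x_n := Σ_{i=0}^∞ τ_{n+i} q_KL^{-(i+1)}. -/

import Mathlib

/-! Put `z = 1 / q` and `F n z = ∑ τ_{n+i} z^i`, so that `x_n = z * F n z`. Matching `N` digits gives
`x_n - x_m = z ^ N * (x_{n+N} - x_{m+N})`, so it is enough that `0 < x_k ≤ 1` for all `k ≥ 1`; since
`x_1 = 1`, the upper bound says that `F k z ≤ F 1 z`.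

That inequality holds for every `z ∈ (0, 1)`. The rules `τ_{2i} = τ_i` and `τ_{2i+1} = 1 - τ_i` give
`F (2k) z = (1 - z) * F k (z²) + z / (1 - z²)` (`tmSeries_two_mul`), so strong induction on the index,
for all `z` at once, compares `F (2k) z` with `F 2 z`. Odd indices follow from
`F (2k+1) z = τ_{2k+1} + z * F (2k+2) z ≤ 1 + z * F 2 z = F 1 z`, and even ones from
`F 2 z ≤ F 1 z`, which is the trivial bound `F 2 z ≤ 1 / (1 - z)` (`tmSeries_le_one`). The recursion
also yields positivity (`tmSeries_pos`). -/

open Filter Set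

noncomputable section

/-- `d` is a `q`-expansion of `x`: all digits lie in `{0,1}` and
`x = ∑_{i=1}^∞ d_i q^{-i}`.  Here `d i` stands for the digit `d_{i+1}`. -/
def IsExpansion (q x : ℝ) (d : ℕ → ℕ) : Prop :=
  (∀ i, d i ≤ 1) ∧ x = ∑' i : ℕ, (d i : ℝ) / q ^ (i + 1)

/-- `𝒰(x)`: the set of bases `q ∈ (1,2]` in which `x` has a unique expansion. -/
def UnivSet (x : ℝ) : Set ℝ :=
  {q | q ∈ Set.Ioc (1 : ℝ) 2 ∧ ∃! d : ℕ → ℕ, IsExpansion q x d}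

/-- `q_s(x) = inf 𝒰(x)`. -/
def qs (x : ℝ) : ℝ := sInf (UnivSet x)

/-- The level set `L(q) = {x > 0 : q_s(x) = q}`. -/
def levelSet (q : ℝ) : Set ℝ := {x | 0 < x ∧ qs x = q}

/-- The golden ratio `q_G = (1+√5)/2`. -/
def qG : ℝ := (1 + Real.sqrt 5) / 2

/-- The Thue–Morse sequence: `tm i = s_i mod 2`, where `s_i` is the number of
`1`s in the binary representation of `i`. -/
def tm (i : ℕ) : ℕ := (Nat.digits 2 i).sum % 2

/-- The set `S ⊆ ℕ`: `2, 3, 4 ∈ S`, and for `k ≥ 2` and `2^k < n ≤ 2^{k+1}`,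
`n ∈ S` iff `n > 3·2^{k-1}` and `n - 3·2^{k-1} ∈ S`; no other elements. -/
inductive memS : ℕ → Prop
  | two : memS 2
  | three : memS 3
  | four : memS 4
  | step (k n : ℕ) (hk : 2 ≤ k) (h1 : 2 ^ k < n) (h2 : n ≤ 2 ^ (k + 1))
      (h3 : 3 * 2 ^ (k - 1) < n) (h : memS (n - 3 * 2 ^ (k - 1))) : memS n

lemma tm_le_one (i : ℕ) : tm i ≤ 1 := by
  unfold tm; omega

lemma tm_two_mul (i : ℕ) : tm (2 * i) = tm i := by
  rcases Nat.eq_zero_or_pos i with rfl | h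
  · rfl
  · unfold tm
    rw [Nat.digits_def' (by norm_num) (by omega)]
    simp

lemma tm_two_mul_add_one (i : ℕ) : (tm (2 * i + 1) : ℝ) = 1 - tm i := by
  have h : tm (2 * i + 1) + tm i = 1 := by
    unfold tm
    rw [Nat.digits_def' (by norm_num) (by omega)]
    have h1 : (2 * i + 1) % 2 = 1 := by omega
    have h2 : (2 * i + 1) / 2 = i := by omega
    rw [h1, h2, List.sum_cons]
    omega
  have h' : (tm (2 * i + 1) : ℝ) + tm i = 1 := by exact_mod_cast h
  linarith

/-- The generating function `∑ τ_{n+i} z^i` of the tail of the Thue–Morse sequence at `n`. -/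
def tmSeries (n : ℕ) (z : ℝ) : ℝ := ∑' i : ℕ, (tm (n + i) : ℝ) * z ^ i

section
variable {z : ℝ}

lemma tm_mul_pow_le (h0 : 0 < z) (n i : ℕ) : (tm (n + i) : ℝ) * z ^ i ≤ z ^ i := by
  have : (tm (n + i) : ℝ) ≤ 1 := by exact_mod_cast tm_le_one _
  exact mul_le_of_le_one_left (by positivity) this

lemma summable_tmSeries (h0 : 0 < z) (h1 : z < 1) (n : ℕ) :
    Summable fun i : ℕ => (tm (n + i) : ℝ) * z ^ i :=
  Summable.of_nonneg_of_le (fun i => by positivity) (tm_mul_pow_le h0 n)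
    (summable_geometric_of_lt_one h0.le h1)

lemma tmSeries_nonneg (h0 : 0 < z) (n : ℕ) : 0 ≤ tmSeries n z :=
  tsum_nonneg fun i => by positivity

lemma tmSeries_le_geom (h0 : 0 < z) (h1 : z < 1) (n : ℕ) : tmSeries n z ≤ (1 - z)⁻¹ := by
  rw [← tsum_geometric_of_lt_one h0.le h1]
  exact (summable_tmSeries h0 h1 n).tsum_le_tsum (tm_mul_pow_le h0 n)
    (summable_geometric_of_lt_one h0.le h1)

lemma tmSeries_succ (h0 : 0 < z) (h1 : z < 1) (n : ℕ) :
    tmSeries n z = tm n + z * tmSeries (n + 1) z := by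
  unfold tmSeries
  rw [(summable_tmSeries h0 h1 n).tsum_eq_zero_add, ← tsum_mul_left]
  simp only [add_zero, pow_zero, mul_one]
  congr 1
  refine tsum_congr fun i => ?_
  rw [show n + (i + 1) = n + 1 + i by ring]
  ring

lemma tmSeries_two_mul (h0 : 0 < z) (h1 : z < 1) (k : ℕ) :
    tmSeries (2 * k) z = (1 - z) * tmSeries k (z ^ 2) + z * (1 - z ^ 2)⁻¹ := by
  have g0 : 0 < z ^ 2 := by positivity
  have g1 : z ^ 2 < 1 := by nlinarith
  have hs := summable_tmSeries h0 h1 (2 * k)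
  have hk := summable_tmSeries g0 g1 k
  have hg := summable_geometric_of_lt_one g0.le g1
  have he : ∀ i, (tm (2 * k + 2 * i) : ℝ) * z ^ (2 * i) = tm (k + i) * (z ^ 2) ^ i := by
    intro i
    rw [← mul_add, tm_two_mul, pow_mul]
  have ho : ∀ i, (tm (2 * k + (2 * i + 1)) : ℝ) * z ^ (2 * i + 1)
      = z * (z ^ 2) ^ i - z * (tm (k + i) * (z ^ 2) ^ i) := by
    intro i
    rw [show 2 * k + (2 * i + 1) = 2 * (k + i) + 1 by ring, tm_two_mul_add_one, pow_succ, pow_mul]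
    ring
  unfold tmSeries
  rw [← tsum_even_add_odd (f := fun i : ℕ => (tm (2 * k + i) : ℝ) * z ^ i)
    (hs.comp_injective (mul_right_injective₀ two_ne_zero))
    (hs.comp_injective fun a b h => by simpa using h)]
  simp only [he, ho]
  rw [(hg.mul_left z).tsum_sub (hk.mul_left z), tsum_mul_left, tsum_mul_left,
    tsum_geometric_of_lt_one g0.le g1]
  ring

lemma tmSeries_pos (h0 : 0 < z) (h1 : z < 1) (n : ℕ) : 0 < tmSeries n z := by
  have key : ∀ k, 0 < tmSeries (2 * k) z := by
    intro k
    have g1 : 0 < 1 - z ^ 2 := by nlinarith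
    have := mul_nonneg (sub_nonneg.2 h1.le) (tmSeries_nonneg (pow_pos h0 2) k)
    rw [tmSeries_two_mul h0 h1]
    positivity
  rcases Nat.even_or_odd' n with ⟨k, rfl | rfl⟩
  · exact key k
  · rw [tmSeries_succ h0 h1, show 2 * k + 1 + 1 = 2 * (k + 1) by ring]
    have := key (k + 1)
    positivity

/-- Among the tails starting at positive indices, the one at `1` has the largest generating
function on all of `(0, 1)`. -/
lemma tmSeries_le_one (n : ℕ) (hn : 1 ≤ n) :
    ∀ z : ℝ, 0 < z → z < 1 → tmSeries n z ≤ tmSeries 1 z := by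
  induction n using Nat.strong_induction_on with
  | _ n ih =>
    intro z h0 h1
    have g0 : 0 < z ^ 2 := by positivity
    have g1 : z ^ 2 < 1 := by nlinarith
    have even_le : ∀ k, 1 ≤ k → k < n → tmSeries (2 * k) z ≤ tmSeries 2 z := by
      intro k hk hkn
      have := mul_le_mul_of_nonneg_left (ih k hkn hk _ g0 g1) (sub_nonneg.2 h1.le)
      have h2 := tmSeries_two_mul h0 h1 1
      rw [mul_one] at h2
      rw [tmSeries_two_mul h0 h1, h2]
      linarith
    have h12 : tmSeries 1 z = 1 + z * tmSeries 2 z := by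
      rw [tmSeries_succ h0 h1 1]
      simp [tm]
    rcases Nat.even_or_odd' n with ⟨k, rfl | rfl⟩
    · have hb : (1 - z) * tmSeries 2 z ≤ 1 := by
        have hz : 0 < 1 - z := by linarith
        calc (1 - z) * tmSeries 2 z ≤ (1 - z) * (1 - z)⁻¹ :=
              mul_le_mul_of_nonneg_left (tmSeries_le_geom h0 h1 2) hz.le
          _ = 1 := mul_inv_cancel₀ hz.ne'
      have := even_le k (by omega) (by omega)
      linarith
    · rcases Nat.eq_zero_or_pos k with rfl | hk
      · simp
      · have h := mul_le_mul_of_nonneg_left (even_le (k + 1) (by omega) (by omega)) h0.le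
        have ht : (tm (2 * k + 1) : ℝ) ≤ 1 := by exact_mod_cast tm_le_one _
        rw [tmSeries_succ h0 h1, show 2 * k + 1 + 1 = 2 * (k + 1) by ring, h12]
        linarith

lemma tmSeries_sub (h0 : 0 < z) (h1 : z < 1) (n m N : ℕ)
    (h : ∀ j < N, tm (n + j) = tm (m + j)) :
    tmSeries n z - tmSeries m z = z ^ N * (tmSeries (n + N) z - tmSeries (m + N) z) := by
  induction N with
  | zero => simp
  | succ N ih =>
    rw [ih fun j hj => h j (by omega), tmSeries_succ h0 h1 (n + N), tmSeries_succ h0 h1 (m + N),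
      h N (by omega), add_assoc, add_assoc]
    ring

end

lemma tsum_tm_div (q : ℝ) (n : ℕ) :
    ∑' i : ℕ, (tm (n + i) : ℝ) / q ^ (i + 1) = q⁻¹ * tmSeries n q⁻¹ := by
  unfold tmSeries
  rw [← tsum_mul_left]
  refine tsum_congr fun i => ?_
  rw [div_eq_mul_inv, ← inv_pow, pow_succ]
  ring

/-- if the tails of the Thue–Morse sequence at `n` and `m` agree
for `N` terms and then differ, then `|x_n - x_m| < q_KL^{-N}`. -/
theorem xn_distance (qKL : ℝ) (hKL : qKL ∈ Set.Ioo (1 : ℝ) 2)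
    (hKLsum : ∑' i : ℕ, (tm (i + 1) : ℝ) / qKL ^ (i + 1) = 1)
    (n m N : ℕ) (hn : 1 ≤ n) (hm : 1 ≤ m) (hnm : n ≠ m)
    (hmatch : ∀ j < N, tm (n + j) = tm (m + j))
    (hdiff : tm (n + N) ≠ tm (m + N)) :
    |(∑' i : ℕ, (tm (n + i) : ℝ) / qKL ^ (i + 1))
      - ∑' i : ℕ, (tm (m + i) : ℝ) / qKL ^ (i + 1)| < qKL ^ (-(N : ℤ)) := by
  obtain ⟨hq1, -⟩ := hKL
  have h0 : 0 < qKL⁻¹ := inv_pos.2 (by linarith)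
  have h1 : qKL⁻¹ < 1 := inv_lt_one_of_one_lt₀ hq1
  have hone : qKL⁻¹ * tmSeries 1 qKL⁻¹ = 1 := by
    rw [← tsum_tm_div, ← hKLsum]
    exact tsum_congr fun i => by rw [add_comm]
  have hbound : ∀ k, 1 ≤ k → 0 < qKL⁻¹ * tmSeries k qKL⁻¹ ∧ qKL⁻¹ * tmSeries k qKL⁻¹ ≤ 1 :=
    fun k hk => ⟨mul_pos h0 (tmSeries_pos h0 h1 k),
      hone ▸ mul_le_mul_of_nonneg_left (tmSeries_le_one k hk _ h0 h1) h0.le⟩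
  obtain ⟨ha0, ha1⟩ := hbound (n + N) (by omega)
  obtain ⟨hb0, hb1⟩ := hbound (m + N) (by omega)
  have hlt : |qKL⁻¹ * tmSeries (n + N) qKL⁻¹ - qKL⁻¹ * tmSeries (m + N) qKL⁻¹| < 1 :=
    abs_lt.2 ⟨by linarith, by linarith⟩
  have hN : 0 < qKL⁻¹ ^ N := pow_pos h0 N
  rw [tsum_tm_div, tsum_tm_div, ← mul_sub, tmSeries_sub h0 h1 n m N hmatch, mul_left_comm, mul_sub,
    abs_mul, abs_of_pos hN, zpow_neg, zpow_natCast, ← inv_pow]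
  exact mul_lt_of_lt_one_right hN hlt
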